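/- For every sign string S, every dominant state string J for S, and any complete execution of the growth algorithm from (S,J) with web tensor w, one has w = e^S_J + Σ_{J' < J} c(S,J,J') e^S_{J'}, where the sum runs over state strings J' for S that are lexicographically smaller than J, and every coefficient c(S,J,J') is a Laurent polynomial in v with nonnegative integer coefficients (an element of ℕ[v,v⁻¹] ⊂ K). In particular the coefficient of e^S_J in w is exactly 1 and the coefficient of e^S_{J'} vanishes whenever J' > J. -/

import Mathlib

/-!
In the basis `e_a ⊗ e_b`, each of the three local maps (H, U, Y) is strictly monotone for the
lexicographic order as far as leading terms are concerned: if `(j₁, j₂)` is rewritten to `j'` by a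
growth rule, then the local map sends `e_{j'}` to `e_{j₁} ⊗ e_{j₂}` plus smaller terms, and it sends
every basis vector smaller than `e_{j'}` to a combination of terms smaller than `e_{j₁} ⊗ e_{j₂}`.
Equivalently (`hCoef_lead`, `yCoef_lead`, `bCoef_lead`; for the U-rule `j'` is empty, so that rows above
`(j₁, j₂)` vanish altogether), a nonzero matrix entry in a row at or above
`(j₁, j₂)` can only sit in a column above `j'`, with the one exception of the entry at
`((j₁, j₂), j')`, which equals `1`.
As the local maps fix all positions to the left, the comparison of whole strings
is decided either left of the rule, where nothing changes, or at the rule, or right of it, where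
again nothing changes (`lex_append`). Induction over the execution gives the leading term
(`web_lead`).
All matrix entries lie in the semiring `ℕ[v, v⁻¹]`, hence so do all coefficients
(`web_natLaurent`).
-/

noncomputable section

/-- The ground field `K = ℚ(v)`. -/
abbrev K : Type := RatFunc ℚ

/-- The indeterminate `v`. -/
def v : K := RatFunc.X

/-- The three states `-1, 0, 1`. -/
inductive St where
  | neg : St
  | zero : St
  | pos : St
deriving DecidableEq

instance : Fintype St where
  elems := {St.neg, St.zero, St.pos}
  complete := fun x => by cases x <;> simp

/-- The integer value of a state. -/
def stval : St → ℤ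
  | .neg => -1
  | .zero => 0
  | .pos => 1

/-- The order `-1 < 0 < 1` on states. -/
def stLt (a b : St) : Prop := stval a < stval b

/-- The weight `μ(s, j) ∈ ℤ²`; `true` is the sign `+`, `false` is `-`. -/
def wt : Bool → St → ℤ × ℤ
  | true, .pos => (1, 0)
  | true, .zero => (-1, 1)
  | true, .neg => (0, -1)
  | false, .pos => (0, 1)
  | false, .zero => (1, -1)
  | false, .neg => (-1, 0)

/-- Total weight `Σ μ(s_k, j_k)` of a sign string and a state string. -/
def wtSum (S : List Bool) (J : List St) : ℤ × ℤ :=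
  ((S.zip J).map fun p => wt p.1 p.2).sum

/-- A state string is dominant if its lattice path stays in the dominant
Weyl chamber and returns to the origin. -/
def Dominant (S : List Bool) (J : List St) : Prop :=
  J.length = S.length ∧
  (∀ k : ℕ, 0 ≤ (wtSum (S.take k) (J.take k)).1 ∧ 0 ≤ (wtSum (S.take k) (J.take k)).2) ∧
  wtSum S J = 0

/-- Coefficients of `b^{+-}(1) ∈ V⁺ ⊗ V⁻`. -/
def bCpm : St → St → K
  | .pos, .neg => 1
  | .zero, .zero => v⁻¹
  | .neg, .pos => v⁻¹ ^ 2
  | _, _ => 0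

/-- Coefficients of `b^{-+}(1) ∈ V⁻ ⊗ V⁺`. -/
def bCmp : St → St → K
  | .pos, .neg => 1
  | .zero, .zero => v⁻¹
  | .neg, .pos => v⁻¹ ^ 2
  | _, _ => 0

/-- Matrix entries of `σ_{+-} : V⁺ ⊗ V⁻ → K`. -/
def sCpm : St → St → K
  | .neg, .pos => 1
  | .zero, .zero => v
  | .pos, .neg => v ^ 2
  | _, _ => 0

/-- Matrix entries of `σ_{-+} : V⁻ ⊗ V⁺ → K`. -/
def sCmp : St → St → K
  | .neg, .pos => 1
  | .zero, .zero => v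
  | .pos, .neg => v ^ 2
  | _, _ => 0

/-- `tYpp a b c` is the coefficient of `e_a ⊗ e_b` in `t^{++}_-(e_c)`. -/
def tYpp : St → St → St → K
  | .pos, .zero, .pos => 1
  | .zero, .pos, .pos => v⁻¹
  | .pos, .neg, .zero => 1
  | .neg, .pos, .zero => v⁻¹
  | .zero, .neg, .neg => 1
  | .neg, .zero, .neg => v⁻¹
  | _, _, _ => 0

/-- `tYmm a b c` is the coefficient of `e_a ⊗ e_b` in `t^{--}_+(e_c)`. -/
def tYmm : St → St → St → K
  | .pos, .zero, .pos => 1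
  | .zero, .pos, .pos => v⁻¹
  | .pos, .neg, .zero => 1
  | .neg, .pos, .zero => v⁻¹
  | .zero, .neg, .neg => 1
  | .neg, .zero, .neg => v⁻¹
  | _, _, _ => 0

/-- `tLpp a b c` is the coefficient of `e_c` in `t^-_{++}(e_a ⊗ e_b)`. -/
def tLpp : St → St → St → K
  | .pos, .zero, .pos => v
  | .zero, .pos, .pos => 1
  | .pos, .neg, .zero => v
  | .neg, .pos, .zero => 1
  | .zero, .neg, .neg => v
  | .neg, .zero, .neg => 1
  | _, _, _ => 0

/-- `tLmm a b c` is the coefficient of `e_c` in `t^+_{--}(e_a ⊗ e_b)`. -/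
def tLmm : St → St → St → K
  | .pos, .zero, .pos => v
  | .zero, .pos, .pos => 1
  | .pos, .neg, .zero => v
  | .neg, .pos, .zero => 1
  | .zero, .neg, .neg => v
  | .neg, .zero, .neg => 1
  | _, _, _ => 0

/-- Matrix entries of the H-map
`(id_{V⁺} ⊗ t^-_{++}) ∘ (t^{++}_- ⊗ id_{V⁺}) : V⁻ ⊗ V⁺ → V⁺ ⊗ V⁻`:
`HCpm a b c d` is the coefficient of `e_a ⊗ e_b` in the image of `e_c ⊗ e_d`. -/
def HCpm (a b c d : St) : K := ∑ y : St, tYpp a y c * tLpp y d b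

/-- Matrix entries of the H-map
`(t^-_{++} ⊗ id_{V⁺}) ∘ (id_{V⁺} ⊗ t^{++}_-) : V⁺ ⊗ V⁻ → V⁻ ⊗ V⁺`:
`HCmp a b c d` is the coefficient of `e_a ⊗ e_b` in the image of `e_c ⊗ e_d`. -/
def HCmp (a b c d : St) : K := ∑ x : St, tLpp c x a * tYpp x b d

/-- State patterns of the three H-rules: `(j_k, j_{k+1})` on top, the
replacement below. -/
inductive HPat : St → St → St → St → Prop where
  | h1 : HPat .pos .zero .zero .pos
  | h2 : HPat .zero .zero .neg .pos
  | h3 : HPat .zero .neg .neg .zero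

/-- State patterns of the three Y-rules. -/
inductive YPat : St → St → St → Prop where
  | y1 : YPat .pos .zero .pos
  | y2 : YPat .pos .neg .zero
  | y3 : YPat .zero .neg .neg

/-- One application of a growth rule, rewriting `(S, J)` to `(S', J')`. -/
inductive Step : List Bool → List St → List Bool → List St → Prop where
  | hstep (A B : List Bool) (P Q : List St) (s1 s2 : Bool) (j1 j2 j1' j2' : St)
      (hl : A.length = P.length) (hs : s1 ≠ s2) (hp : HPat j1 j2 j1' j2') :
      Step (A ++ s1 :: s2 :: B) (P ++ j1 :: j2 :: Q)
        (A ++ (!s1) :: (!s2) :: B) (P ++ j1' :: j2' :: Q)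
  | ustep (A B : List Bool) (P Q : List St) (s1 s2 : Bool)
      (hl : A.length = P.length) (hs : s1 ≠ s2) :
      Step (A ++ s1 :: s2 :: B) (P ++ St.pos :: St.neg :: Q) (A ++ B) (P ++ Q)
  | ystep (A B : List Bool) (P Q : List St) (s : Bool) (j1 j2 j' : St)
      (hl : A.length = P.length) (hp : YPat j1 j2 j') :
      Step (A ++ s :: s :: B) (P ++ j1 :: j2 :: Q) (A ++ (!s) :: B) (P ++ j' :: Q)

/-- A complete execution of the growth algorithm from `(S, J)` down to the
pair of empty strings. -/
inductive Exec : List Bool → List St → Type where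
  | nil : Exec [] []
  | hstep (A B : List Bool) (P Q : List St) (s1 s2 : Bool) (j1 j2 j1' j2' : St)
      (hl : A.length = P.length) (hs : s1 ≠ s2) (hp : HPat j1 j2 j1' j2')
      (e : Exec (A ++ (!s1) :: (!s2) :: B) (P ++ j1' :: j2' :: Q)) :
      Exec (A ++ s1 :: s2 :: B) (P ++ j1 :: j2 :: Q)
  | ustep (A B : List Bool) (P Q : List St) (s1 s2 : Bool)
      (hl : A.length = P.length) (hs : s1 ≠ s2)
      (e : Exec (A ++ B) (P ++ Q)) :
      Exec (A ++ s1 :: s2 :: B) (P ++ St.pos :: St.neg :: Q)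
  | ystep (A B : List Bool) (P Q : List St) (s : Bool) (j1 j2 j' : St)
      (hl : A.length = P.length) (hp : YPat j1 j2 j')
      (e : Exec (A ++ (!s) :: B) (P ++ j' :: Q)) :
      Exec (A ++ s :: s :: B) (P ++ j1 :: j2 :: Q)

/-- The web tensor of an execution, as coordinates with respect to the basis
`e^S_J` of `V^S`: `web e L` is the coefficient of `e^S_L`. -/
def web : {S : List Bool} → {J : List St} → Exec S J → List St → K
  | _, _, .nil, L => if L = [] then 1 else 0
  | _, _, .hstep A _ _ _ s1 _ _ _ _ _ _ _ _ e, L =>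
      match L.drop A.length with
      | a :: b :: R =>
          ∑ c : St, ∑ d : St,
            (if s1 then HCpm a b c d else HCmp a b c d) *
              web e (L.take A.length ++ c :: d :: R)
      | _ => 0
  | _, _, .ustep A _ _ _ s1 _ _ _ e, L =>
      match L.drop A.length with
      | a :: b :: R => (if s1 then bCpm a b else bCmp a b) * web e (L.take A.length ++ R)
      | _ => 0
  | _, _, .ystep A _ _ _ s _ _ _ _ _ e, L =>
      match L.drop A.length with
      | a :: b :: R =>
          ∑ c : St, (if s then tYpp a b c else tYmm a b c) * web e (L.take A.length ++ c :: R)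
      | _ => 0

/-- `c ∈ v⁻¹ ℤ[v⁻¹]`: a polynomial in `v⁻¹` with zero constant term. -/
def ZeroConst (c : K) : Prop :=
  ∃ p : Polynomial ℤ, p.coeff 0 = 0 ∧ c = Polynomial.aeval v⁻¹ p

/-- `x` has the negative-exponent property relative to a state string `J`
(`n` is the length of the ambient sign string). -/
def NegExpProp (n : ℕ) (x : List St → K) (J : List St) : Prop :=
  x J = 1 ∧ ∀ J' : List St, J'.length = n → J' ≠ J → ZeroConst (x J')

/-- `c ∈ ℕ[v, v⁻¹]`: a Laurent polynomial with nonnegative integer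
coefficients. -/
def IsNatLaurent (c : K) : Prop :=
  ∃ (p : Polynomial ℕ) (m : ℕ), c = v⁻¹ ^ m * Polynomial.aeval v p

/-- `c ∈ ℤ[v⁻¹]`. -/
def InZInv (c : K) : Prop := ∃ p : Polynomial ℤ, c = Polynomial.aeval v⁻¹ p

/-- Property P: all coefficients lie in `ℤ[v⁻¹]` and at most one of them has a
nonzero constant term. -/
def PropP (n : ℕ) (x : List St → K) : Prop :=
  (∀ J : List St, J.length = n → InZInv (x J)) ∧
  ∀ J1 J2 : List St, J1.length = n → J2.length = n →
    ¬ ZeroConst (x J1) → ¬ ZeroConst (x J2) → J1 = J2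

/-- The sign string `(+,+,−,−,+,+,−,−,+,+,−,−)`. -/
def base : List Bool :=
  [true, true, false, false, true, true, false, false, true, true, false, false]

/-! ### The semiring `ℕ[v, v⁻¹]` -/

lemma v_ne_zero : v ≠ 0 := RatFunc.X_ne_zero

lemma IsNatLaurent.zero : IsNatLaurent 0 := ⟨0, 0, by simp⟩

lemma IsNatLaurent.one : IsNatLaurent 1 := ⟨1, 0, by simp⟩

lemma isNatLaurent_v : IsNatLaurent v := ⟨Polynomial.X, 0, by simp⟩

lemma isNatLaurent_v_inv : IsNatLaurent v⁻¹ := ⟨1, 1, by simp⟩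

lemma IsNatLaurent.mul {x y : K} (hx : IsNatLaurent x) (hy : IsNatLaurent y) :
    IsNatLaurent (x * y) := by
  obtain ⟨p, m, rfl⟩ := hx
  obtain ⟨q, n, rfl⟩ := hy
  exact ⟨p * q, m + n, by rw [map_mul, pow_add]; ring⟩

lemma IsNatLaurent.add {x y : K} (hx : IsNatLaurent x) (hy : IsNatLaurent y) :
    IsNatLaurent (x + y) := by
  obtain ⟨p, m, rfl⟩ := hx
  obtain ⟨q, n, rfl⟩ := hy
  refine ⟨Polynomial.X ^ n * p + Polynomial.X ^ m * q, m + n, ?_⟩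
  have hv := v_ne_zero
  simp only [map_add, map_mul, map_pow, Polynomial.aeval_X, inv_pow, pow_add]
  field_simp

lemma IsNatLaurent.sum {f : St → K} (hf : ∀ c, IsNatLaurent (f c)) :
    IsNatLaurent (∑ c, f c) :=
  Finset.sum_induction f IsNatLaurent (fun _ _ => IsNatLaurent.add) .zero fun c _ => hf c

lemma isNatLaurent_tYpp (a b c : St) : IsNatLaurent (tYpp a b c) := by
  cases a <;> cases b <;> cases c <;>
    first
    | exact .zero
    | exact .one
    | exact isNatLaurent_v_inv

lemma isNatLaurent_tLpp (a b c : St) : IsNatLaurent (tLpp a b c) := by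
  cases a <;> cases b <;> cases c <;>
    first
    | exact .zero
    | exact .one
    | exact isNatLaurent_v

lemma isNatLaurent_bCpm (a b : St) : IsNatLaurent (bCpm a b) := by
  cases a <;> cases b <;>
    first
    | exact .zero
    | exact .one
    | exact isNatLaurent_v_inv
    | exact ⟨1, 2, by simp [bCpm]⟩

/-! ### Matrix entries of the local maps -/

lemma bCmp_eq : bCmp = bCpm := by
  funext a b; cases a <;> cases b <;> rfl

lemma tYmm_eq : tYmm = tYpp := by
  funext a b c; cases a <;> cases b <;> cases c <;> rfl

/-- Matrix entries of the H-map for the sign `s` of the left boundary point. -/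
def hCoef (s : Bool) (a b c d : St) : K := if s then HCpm a b c d else HCmp a b c d

lemma isNatLaurent_hCoef (s : Bool) (a b c d : St) : IsNatLaurent (hCoef s a b c d) := by
  cases s
  · rw [hCoef, if_neg Bool.false_ne_true, HCmp]
    exact .sum fun x => (isNatLaurent_tLpp _ _ _).mul (isNatLaurent_tYpp _ _ _)
  · rw [hCoef, if_pos rfl, HCpm]
    exact .sum fun x => (isNatLaurent_tYpp _ _ _).mul (isNatLaurent_tLpp _ _ _)

lemma sum_St (f : St → K) : ∑ c, f c = f .neg + (f .zero + f .pos) := by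
  have h : (Finset.univ : Finset St) = {St.neg, St.zero, St.pos} := rfl
  rw [h]
  simp

/-- The lexicographic order on pairs of states. -/
def PairLt (a b c d : St) : Prop := stLt a c ∨ a = c ∧ stLt b d

lemma hCoef_diag {j1 j2 j1' j2' : St} (hp : HPat j1 j2 j1' j2') (s : Bool) :
    hCoef s j1 j2 j1' j2' = 1 := by
  cases hp <;> cases s <;> simp [hCoef, HCpm, HCmp, sum_St, tYpp, tLpp]

set_option maxHeartbeats 4000000 in
/-- The support of the H-matrix is upper triangular with respect to each rewriting pattern of the
H-rules: entries in a row above `(j1, j2)` lie in columns above `(j1', j2')`, and entries in the row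
`(j1, j2)` lie in columns at or above `(j1', j2')`. -/
lemma hCoef_lead {j1 j2 j1' j2' : St} (hp : HPat j1 j2 j1' j2') (s : Bool) (a b c d : St)
    (hne : hCoef s a b c d ≠ 0) :
    (PairLt j1 j2 a b → PairLt j1' j2' c d) ∧
    (a = j1 → b = j2 → PairLt j1' j2' c d ∨ c = j1' ∧ d = j2') := by
  revert hne
  cases hp <;> cases a <;> cases b <;> cases c <;> cases d <;> cases s <;>
    simp [hCoef, HCpm, HCmp, sum_St, tYpp, tLpp, PairLt, stLt, stval]

lemma yCoef_diag {j1 j2 j' : St} (hp : YPat j1 j2 j') : tYpp j1 j2 j' = 1 := by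
  cases hp <;> rfl

lemma yCoef_lead {j1 j2 j' : St} (hp : YPat j1 j2 j') (a b c : St) (hne : tYpp a b c ≠ 0) :
    (PairLt j1 j2 a b → stLt j' c) ∧ (a = j1 → b = j2 → stLt j' c ∨ c = j') := by
  revert hne
  cases hp <;> cases a <;> cases b <;> cases c <;> simp [tYpp, PairLt, stLt, stval]

lemma bCoef_lead (a b : St) (hlt : PairLt .pos .neg a b) : bCpm a b = 0 := by
  revert hlt
  cases a <;> cases b <;> simp [bCpm, PairLt, stLt, stval]

/-! ### Lexicographic comparison -/

lemma lex_cons_iff (a b : St) (Q R : List St) :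
    List.Lex stLt (a :: Q) (b :: R) ↔ stLt a b ∨ a = b ∧ List.Lex stLt Q R := by
  constructor
  · intro h
    cases h with
    | cons h => exact .inr ⟨rfl, h⟩
    | rel h => exact .inl h
  · rintro (h | ⟨rfl, h⟩)
    exacts [.rel h, .cons h]

lemma lex_append {P P' : List St} (hl : P.length = P'.length) (X Y : List St) :
    List.Lex stLt (P ++ X) (P' ++ Y) ↔ List.Lex stLt P P' ∨ P = P' ∧ List.Lex stLt X Y := by
  induction P generalizing P' with
  | nil =>
    obtain rfl : P' = [] := List.length_eq_zero_iff.mp hl.symm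
    simp
  | cons p P ih =>
    obtain _ | ⟨p', P'⟩ := P'
    · simp at hl
    · simp only [List.cons_append, lex_cons_iff, ih (Nat.succ.inj hl), List.cons.injEq]
      tauto

lemma lex_cons_cons (a b c d : St) (Q R : List St) :
    List.Lex stLt (a :: b :: Q) (c :: d :: R) ↔
      PairLt a b c d ∨ (a = c ∧ b = d) ∧ List.Lex stLt Q R := by
  simp only [lex_cons_iff, PairLt]
  tauto

/-! ### Web tensors -/

section WebSteps

variable {A B : List Bool} {P Q : List St} {s1 s2 s : Bool} {j1 j2 j1' j2' j' : St}

lemma web_hstep (hl : A.length = P.length) (hs : s1 ≠ s2) (hp : HPat j1 j2 j1' j2')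
    (e : Exec (A ++ (!s1) :: (!s2) :: B) (P ++ j1' :: j2' :: Q))
    {P' : List St} (hP : P'.length = P.length) (a b : St) (R : List St) :
    web (.hstep A B P Q s1 s2 j1 j2 j1' j2' hl hs hp e) (P' ++ a :: b :: R) =
      ∑ c, ∑ d, hCoef s1 a b c d * web e (P' ++ c :: d :: R) := by
  simp [web, hl, ← hP, hCoef]

lemma web_ustep (hl : A.length = P.length) (hs : s1 ≠ s2) (e : Exec (A ++ B) (P ++ Q))
    {P' : List St} (hP : P'.length = P.length) (a b : St) (R : List St) :
    web (.ustep A B P Q s1 s2 hl hs e) (P' ++ a :: b :: R) = bCpm a b * web e (P' ++ R) := by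
  simp [web, hl, ← hP, bCmp_eq]

lemma web_ystep (hl : A.length = P.length) (hp : YPat j1 j2 j')
    (e : Exec (A ++ (!s) :: B) (P ++ j' :: Q))
    {P' : List St} (hP : P'.length = P.length) (a b : St) (R : List St) :
    web (.ystep A B P Q s j1 j2 j' hl hp e) (P' ++ a :: b :: R) =
      ∑ c, tYpp a b c * web e (P' ++ c :: R) := by
  simp [web, hl, ← hP, tYmm_eq]

end WebSteps

/-- Either `L` is long enough to have two entries after position `n`, or the `match` in the
definition of `web` falls through to its default value. -/
lemma split_or_short (n : ℕ) (L : List St) :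
    (∃ P' a b R, P'.length = n ∧ L = P' ++ a :: b :: R) ∨
      L.drop n = [] ∨ ∃ a, L.drop n = [a] := by
  rcases h : L.drop n with _ | ⟨a, _ | ⟨b, R⟩⟩
  · simp
  · simp
  · refine .inl ⟨L.take n, a, b, R, ?_, by rw [← h, List.take_append_drop]⟩
    have := congrArg List.length h
    simp only [List.length_drop, List.length_cons] at this
    rw [List.length_take]
    omega

theorem web_natLaurent {S : List Bool} {J : List St} (e : Exec S J) (L : List St) :
    IsNatLaurent (web e L) := by
  induction e generalizing L with
  | nil =>
    rw [web]
    split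
    exacts [.one, .zero]
  | hstep A B P Q s1 s2 j1 j2 j1' j2' hl hs hp e ih =>
    rcases split_or_short A.length L with ⟨P', a, b, R, hP, rfl⟩ | h | ⟨a, h⟩
    · rw [web_hstep hl hs hp e (hP.trans hl)]
      exact .sum fun c => .sum fun d => (isNatLaurent_hCoef _ _ _ _ _).mul (ih _)
    all_goals simpa only [web, h] using IsNatLaurent.zero
  | ustep A B P Q s1 s2 hl hs e ih =>
    rcases split_or_short A.length L with ⟨P', a, b, R, hP, rfl⟩ | h | ⟨a, h⟩
    · rw [web_ustep hl hs e (hP.trans hl)]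
      exact (isNatLaurent_bCpm _ _).mul (ih _)
    all_goals simpa only [web, h] using IsNatLaurent.zero
  | ystep A B P Q s j1 j2 j' hl hp e ih =>
    rcases split_or_short A.length L with ⟨P', a, b, R, hP, rfl⟩ | h | ⟨a, h⟩
    · rw [web_ystep hl hp e (hP.trans hl)]
      exact .sum fun c => (isNatLaurent_tYpp _ _ _).mul (ih _)
    all_goals simpa only [web, h] using IsNatLaurent.zero

/-- The leading term of a web tensor. No condition on the length of `L` is needed, since `web e`
vanishes on strings of the wrong length. -/
theorem web_lead {S : List Bool} {J : List St} (e : Exec S J) :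
    web e J = 1 ∧ ∀ L, List.Lex stLt J L → web e L = 0 := by
  induction e with
  | nil =>
    refine ⟨by simp [web], fun L hL => ?_⟩
    cases hL
    simp [web]
  | hstep A B P Q s1 s2 j1 j2 j1' j2' hl hs hp e ih =>
    obtain ⟨ih1, ih0⟩ := ih
    constructor
    · rw [web_hstep hl hs hp e rfl]
      -- Every entry of the row `(j1, j2)` other than the one at `(j1', j2')` is either zero or
      -- meets a coefficient that vanishes by induction.
      have key : ∀ c d, ¬ (c = j1' ∧ d = j2') →
          hCoef s1 j1 j2 c d * web e (P ++ c :: d :: Q) = 0 := by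
        intro c d hcd
        by_cases h0 : hCoef s1 j1 j2 c d = 0
        · rw [h0, zero_mul]
        · have hlt := ((hCoef_lead hp s1 _ _ c d h0).2 rfl rfl).resolve_right hcd
          rw [ih0 _ ((lex_append rfl _ _).2 (.inr ⟨rfl, (lex_cons_cons ..).2 (.inl hlt)⟩)),
            mul_zero]
      rw [Fintype.sum_eq_single j1', Fintype.sum_eq_single j2', hCoef_diag hp, ih1, mul_one]
      · exact fun d hd => key _ _ fun h => hd h.2
      · exact fun c hc => Finset.sum_eq_zero fun d _ => key _ _ fun h => hc h.1
    · intro L hL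
      rcases split_or_short A.length L with ⟨P', a, b, R, hP, rfl⟩ | h | ⟨a, h⟩
      · have hPP := (hP.trans hl)
        rw [web_hstep hl hs hp e hPP]
        refine Finset.sum_eq_zero fun c _ => Finset.sum_eq_zero fun d _ => ?_
        by_cases h0 : hCoef s1 a b c d = 0
        · rw [h0, zero_mul]
        · rw [ih0, mul_zero]
          obtain ⟨hgt, heq⟩ := hCoef_lead hp s1 a b c d h0
          rw [lex_append hPP.symm, lex_cons_cons] at hL ⊢
          rcases hL with hL | ⟨hL, hlt | ⟨⟨rfl, rfl⟩, hQ⟩⟩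
          · exact .inl hL
          · exact .inr ⟨hL, .inl (hgt hlt)⟩
          · rcases heq rfl rfl with h | ⟨rfl, rfl⟩
            · exact .inr ⟨hL, .inl h⟩
            · exact .inr ⟨hL, .inr ⟨⟨rfl, rfl⟩, hQ⟩⟩
      all_goals simp only [web, h]
  | ustep A B P Q s1 s2 hl hs e ih =>
    obtain ⟨ih1, ih0⟩ := ih
    constructor
    · rw [web_ustep hl hs e rfl, ih1, mul_one]
      rfl
    · intro L hL
      rcases split_or_short A.length L with ⟨P', a, b, R, hP, rfl⟩ | h | ⟨a, h⟩
      · have hPP := (hP.trans hl)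
        rw [web_ustep hl hs e hPP]
        rw [lex_append hPP.symm, lex_cons_cons] at hL
        rcases hL with hL | ⟨hL, hlt | ⟨-, hQ⟩⟩
        · rw [ih0 _ ((lex_append hPP.symm _ _).2 (.inl hL)), mul_zero]
        · rw [bCoef_lead a b hlt, zero_mul]
        · rw [ih0 _ ((lex_append hPP.symm _ _).2 (.inr ⟨hL, hQ⟩)), mul_zero]
      all_goals simp only [web, h]
  | ystep A B P Q s j1 j2 j' hl hp e ih =>
    obtain ⟨ih1, ih0⟩ := ih
    constructor
    · rw [web_ystep hl hp e rfl, Fintype.sum_eq_single j', yCoef_diag hp, ih1, mul_one]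
      intro c hc
      by_cases h0 : tYpp j1 j2 c = 0
      · rw [h0, zero_mul]
      · have hlt := ((yCoef_lead hp _ _ c h0).2 rfl rfl).resolve_right hc
        rw [ih0 _ ((lex_append rfl _ _).2 (.inr ⟨rfl, .rel hlt⟩)), mul_zero]
    · intro L hL
      rcases split_or_short A.length L with ⟨P', a, b, R, hP, rfl⟩ | h | ⟨a, h⟩
      · have hPP := (hP.trans hl)
        rw [web_ystep hl hp e hPP]
        refine Finset.sum_eq_zero fun c _ => ?_
        by_cases h0 : tYpp a b c = 0
        · rw [h0, zero_mul]
        · rw [ih0, mul_zero]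
          obtain ⟨hgt, heq⟩ := yCoef_lead hp a b c h0
          rw [lex_append hPP.symm] at hL ⊢
          rw [lex_cons_cons] at hL
          rcases hL with hL | ⟨hL, hlt | ⟨⟨rfl, rfl⟩, hQ⟩⟩
          · exact .inl hL
          · exact .inr ⟨hL, .rel (hgt hlt)⟩
          · rcases heq rfl rfl with h | rfl
            · exact .inr ⟨hL, .rel h⟩
            · exact .inr ⟨hL, .cons hQ⟩
      all_goals simp only [web, h]

/-- the web tensor is `e^S_J` plus an `ℕ[v,v⁻¹]`-combination of
lexicographically smaller basis vectors. -/
theorem web_triangular (S : List Bool) (J : List St) (hJ : Dominant S J)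
    (e : Exec S J) :
    web e J = 1 ∧
    ∀ J' : List St, J'.length = S.length →
      (List.Lex stLt J J' → web e J' = 0) ∧
      (List.Lex stLt J' J → IsNatLaurent (web e J')) :=
  ⟨(web_lead e).1, fun J' _ => ⟨(web_lead e).2 J', fun _ => web_natLaurent e J'⟩⟩

end
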